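/- For all integers α ≥ 2 and n ≥ 2, the minimal number of Pauli settings for two-body overlapping tomography satisfies φ₂(n) ≤ (φ₂(α) − 1) · ⌈log_α n⌉ + 1, where ⌈log_α n⌉ denotes the least integer x with α^x ≥ n. -/

import Mathlib

/-!
Take a Pauli set on `α` vertices of minimum size `m`. Subtracting one of its members from all of
them, pointwise in `Fin 3`, relabels the values at each vertex, so the result is again a Pauli set
of size `m`, and it contains the constant `0` (`exists_isPauliSet_zero_mem`).

If `n ≤ α ^ x`, the `n` vertices can be labelled by distinct words of length `x` over `Fin α`. Pull
the Pauli set back along each of the `x` letter positions. Two distinct vertices differ at some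
position, and the pullback along that position realizes every pair of values on them. All `x`
pullbacks share the constant `0`, so their union has at most `(m - 1) * x + 1` elements.
-/

/-- A Pauli set for a simple graph `G`: a finite set `S` of assignments of a Pauli
operator (an element of `Fin 3`) to each vertex, such that for every edge `{i, j}`
of `G` and every pair of values `(a, b)` some `f ∈ S` has `f i = a` and `f j = b`. -/
def IsPauliSet {V : Type*} (G : SimpleGraph V) (S : Finset (V → Fin 3)) : Prop :=
  ∀ i j : V, G.Adj i j → ∀ a b : Fin 3, ∃ f ∈ S, f i = a ∧ f j = b

/-- `phi2G G` is the minimum cardinality of a Pauli set for `G`. -/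
noncomputable def phi2G {V : Type*} (G : SimpleGraph V) : ℕ :=
  sInf {N : ℕ | ∃ S : Finset (V → Fin 3), S.card = N ∧ IsPauliSet G S}

/-- `phi2 n` is `phi2G` of the complete graph on `n` vertices: the minimal number of
Pauli settings for two-body overlapping tomography of `n` qubits. -/
noncomputable def phi2 (n : ℕ) : ℕ := phi2G (⊤ : SimpleGraph (Fin n))

/-- The minimum defining `phi2` is attained, by a Pauli set containing the constant `0`. -/
lemma exists_isPauliSet_zero_mem (α : ℕ) (hα : 2 ≤ α) :
    ∃ S : Finset (Fin α → Fin 3), S.card = phi2 α ∧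
      IsPauliSet (⊤ : SimpleGraph (Fin α)) S ∧ 0 ∈ S := by
  have hne : {N : ℕ | ∃ S : Finset (Fin α → Fin 3), S.card = N ∧
      IsPauliSet (⊤ : SimpleGraph (Fin α)) S}.Nonempty := by
    refine ⟨_, Finset.univ, rfl, ?_⟩
    intro i j hij a b
    exact ⟨fun k => if k = i then a else b, Finset.mem_univ _, by simp,
      by simp [((SimpleGraph.top_adj i j).1 hij).symm]⟩
  obtain ⟨S, hcard, hS⟩ := Nat.sInf_mem hne
  -- Since `α ≥ 2` there is an edge, so `S` has a member `f`.
  obtain ⟨f, hf, -⟩ := hS ⟨0, by lia⟩ ⟨1, by lia⟩ (by simp) 0 0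
  refine ⟨S.image (fun g => g - f), ?_, ?_, ?_⟩
  · rw [Finset.card_image_of_injective _ (sub_left_injective (b := f)), hcard]
    rfl
  · intro i j hij a b
    obtain ⟨g, hg, hi, hj⟩ := hS i j hij (a + f i) (b + f j)
    exact ⟨g - f, Finset.mem_image_of_mem _ hg, by simp [hi], by simp [hj]⟩
  · exact Finset.mem_image.2 ⟨f, hf, sub_self f⟩

/-- For `α ≥ 2` and `n ≥ 2`, `φ₂(n) ≤ (φ₂(α) − 1) ⌈log_α n⌉ + 1`, where `⌈log_α n⌉`
is the least integer `x` with `α^x ≥ n`. -/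
theorem phi2_le_clog (α n : ℕ) (hα : 2 ≤ α) (hn : 2 ≤ n) :
    phi2 n ≤ (phi2 α - 1) * sInf {x : ℕ | n ≤ α ^ x} + 1 := by
  classical
  have hx : n ≤ α ^ sInf {x : ℕ | n ≤ α ^ x} :=
    Nat.sInf_mem (s := {x : ℕ | n ≤ α ^ x}) ⟨n, (Nat.lt_pow_self (by lia)).le⟩
  generalize sInf {x : ℕ | n ≤ α ^ x} = x at hx ⊢
  obtain ⟨S, hcard, hS, h0⟩ := exists_isPauliSet_zero_mem α hα
  obtain ⟨w⟩ : Nonempty (Fin n ↪ (Fin x → Fin α)) :=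
    Function.Embedding.nonempty_of_card_le (by simpa using hx)
  let T : Finset (Fin n → Fin 3) := insert 0
    (((S.erase 0) ×ˢ (Finset.univ : Finset (Fin x))).image (fun p i => p.1 (w i p.2)))
  have hT : IsPauliSet (⊤ : SimpleGraph (Fin n)) T := by
    intro i j hij a b
    obtain ⟨k, hk⟩ := Function.ne_iff.1 (w.injective.ne ((SimpleGraph.top_adj i j).1 hij))
    obtain ⟨g, hg, hi, hj⟩ := hS (w i k) (w j k) hk a b
    by_cases hg0 : g = 0
    · subst hg0
      exact ⟨0, Finset.mem_insert_self _ _, hi, hj⟩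
    · exact ⟨fun i => g (w i k), Finset.mem_insert_of_mem (Finset.mem_image.2
        ⟨(g, k), by simp [hg, hg0], rfl⟩), hi, hj⟩
  calc phi2 n ≤ T.card := Nat.sInf_le ⟨T, rfl, hT⟩
    _ ≤ _ + 1 := Finset.card_insert_le _ _
    _ ≤ (phi2 α - 1) * x + 1 := by
      gcongr
      refine Finset.card_image_le.trans ?_
      rw [Finset.card_product, Finset.card_erase_of_mem h0, hcard, Finset.card_univ,
        Fintype.card_fin]
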